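/- Let G ⊆ C(ℝ,ℝ) be nonempty. The following are equivalent: (1) K_G = {CL(ℝ) ∩ P(X) : X ⊆ ℝ}; (2) G is complete and connected, and for every x ∈ ℝ there exists a continuous f : ℝ → ℝ such that the set of points of the graph of f not belonging to ⋃G is exactly {(x, f(x))} (i.e., f(y) ∈ G[y] for all y ≠ x and f(x) ∉ G[x]). -/

import Mathlib

/-!
The implication from the description of `K_G` is a direct use of the Galois connection: families
of the form `E_G({f})` belong to `K_G`, hence are of the form `CL(ℝ) ∩ P(X)`; since they contain
a singleton `{x}` as soon as `f x ∈ G[x]`, they contain every closed set of such points. Taking all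
of `ℝ`, or a two-point set, gives completeness and connectedness. The family of closed sets
avoiding `x` gives the last condition.

The converse rests on an extension property (`exists_eqOn`): if `G` is complete and connected, `E`
is closed, `f` is continuous and `f x ∈ G[x]` for all `x ∈ E`, then some `g ∈ G` agrees with `f` on
`E`. By completeness it suffices to fill each gap `(a, b)` of `E` with a member of `G` matching `f`
at `a` and `b`, in such a way that the result is continuous. Completeness makes `G` closed under
`max`, `min` and under gluing at a common value, so taking medians shows that the bridge can be kept
inside any open interval which contains `f a`, `f b` and the values on `[a, b]` of a single member
of `G` (`exists_bridge`). Choosing in every gap a bridge that is optimal up to the error `b - a`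
(`exists_optimal`), bridges over gaps shrinking to `p ∈ E` converge to `f p`, as is seen by
comparison with a member of `G` through `(p, f p)`.
-/


open Set

/-- The set of continuous real functions `C(ℝ,ℝ)`. -/
def ContFun : Set (ℝ → ℝ) := {f | Continuous f}

/-- The family `CL(ℝ)` of closed subsets of `ℝ`. -/
def CLR : Set (Set ℝ) := {E | IsClosed E}

/-- The relation `R_G`: `f` agrees on `E` with some member of `G`. -/
def RG (G : Set (ℝ → ℝ)) (f : ℝ → ℝ) (E : Set ℝ) : Prop := ∃ g ∈ G, Set.EqOn f g E

/-- `E_G(F)`: closed sets `E` such that every `f ∈ F` agrees on `E` with some member of `G`. -/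
def EG (G F : Set (ℝ → ℝ)) : Set (Set ℝ) := {E | E ∈ CLR ∧ ∀ f ∈ F, RG G f E}

/-- `F_G(ℰ)`: continuous functions agreeing on every `E ∈ ℰ` with some member of `G`. -/
def FG (G : Set (ℝ → ℝ)) (ℰ : Set (Set ℝ)) : Set (ℝ → ℝ) := {f | f ∈ ContFun ∧ ∀ E ∈ ℰ, RG G f E}

/-- The lattice `K_G` of closed families of closed sets. -/
def KG (G : Set (ℝ → ℝ)) : Set (Set (Set ℝ)) := {ℰ | EG G (FG G ℰ) = ℰ}

/-- The lattice `L_G` of closed families of continuous functions. -/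
def LG (G : Set (ℝ → ℝ)) : Set (Set (ℝ → ℝ)) := {F | FG G (EG G F) = F}

/-- A family of continuous functions is complete if it contains every continuous function
whose graph is contained in the union of the graphs of its members. -/
def FamComplete (G : Set (ℝ → ℝ)) : Prop :=
  ∀ f : ℝ → ℝ, Continuous f → (∀ x : ℝ, ∃ g ∈ G, g x = f x) → f ∈ G

/-- A family of functions is connected if any pair of values of its members at two distinct
points is interpolated by a member. -/
def FamConnected (G : Set (ℝ → ℝ)) : Prop :=
  ∀ f ∈ G, ∀ g ∈ G, ∀ x y : ℝ, x ≠ y → ∃ h ∈ G, h x = f x ∧ h y = g y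

open Filter Topology

/-! ### Operations on complete families -/

section Operations

variable {G : Set (ℝ → ℝ)}

/-- The function equal to `f` up to `c` and to `g` after `c`. -/
noncomputable def glueAt (c : ℝ) (f g : ℝ → ℝ) : ℝ → ℝ := fun x => if x ≤ c then f x else g x

lemma glueAt_left {c x : ℝ} {f g : ℝ → ℝ} (h : x ≤ c) : glueAt c f g x = f x := if_pos h

lemma glueAt_right {c x : ℝ} {f g : ℝ → ℝ} (hc : f c = g c) (h : c ≤ x) :
    glueAt c f g x = g x := by
  rcases h.eq_or_lt with rfl | h
  · rw [glueAt_left le_rfl, hc]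
  · exact if_neg (not_le.2 h)

lemma continuous_glueAt {c : ℝ} {f g : ℝ → ℝ} (hf : Continuous f) (hg : Continuous g)
    (hc : f c = g c) : Continuous (glueAt c f g) :=
  Continuous.if_le hf hg continuous_id continuous_const (by rintro x rfl; exact hc)

lemma glueAt_mem (hG : G ⊆ ContFun) (hcomp : FamComplete G) {c : ℝ} {f g : ℝ → ℝ} (hf : f ∈ G)
    (hg : g ∈ G) (hc : f c = g c) : glueAt c f g ∈ G := by
  refine hcomp _ (continuous_glueAt (hG hf) (hG hg) hc) fun x => ?_
  rcases le_total x c with h | h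
  · exact ⟨f, hf, (glueAt_left h).symm⟩
  · exact ⟨g, hg, (glueAt_right hc h).symm⟩

lemma max_mem (hG : G ⊆ ContFun) (hcomp : FamComplete G) {f g : ℝ → ℝ} (hf : f ∈ G)
    (hg : g ∈ G) : (fun x => max (f x) (g x)) ∈ G := by
  refine hcomp _ (Continuous.max (hG hf) (hG hg)) fun x => ?_
  rcases max_choice (f x) (g x) with h | h
  · exact ⟨f, hf, h.symm⟩
  · exact ⟨g, hg, h.symm⟩

lemma min_mem (hG : G ⊆ ContFun) (hcomp : FamComplete G) {f g : ℝ → ℝ} (hf : f ∈ G)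
    (hg : g ∈ G) : (fun x => min (f x) (g x)) ∈ G := by
  refine hcomp _ (Continuous.min (hG hf) (hG hg)) fun x => ?_
  rcases min_choice (f x) (g x) with h | h
  · exact ⟨f, hf, h.symm⟩
  · exact ⟨g, hg, h.symm⟩

/-- Two members of `G` can be joined by a member lying between them: take the median of both
and of any member joining them. -/
lemma exists_mem_between (hG : G ⊆ ContFun) (hcomp : FamComplete G) (hconn : FamConnected G)
    {f g : ℝ → ℝ} (hf : f ∈ G) (hg : g ∈ G) {a b : ℝ} (hab : a ≠ b) :
    ∃ k ∈ G, k a = f a ∧ k b = g b ∧ ∀ y, min (f y) (g y) ≤ k y ∧ k y ≤ max (f y) (g y) := by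
  obtain ⟨m, hm, hma, hmb⟩ := hconn f hf g hg a b hab
  refine ⟨_, max_mem hG hcomp (min_mem hG hcomp hf hg)
    (min_mem hG hcomp (max_mem hG hcomp hf hg) hm), ?_, ?_, fun y => ⟨le_max_left _ _, ?_⟩⟩
  · simp [hma]
  · simp [hmb]
  · exact max_le (min_le_max) (min_le_left _ _)

/-- Two values at `a` and `b` are joined by a member of `G` staying on `[a, b]` inside any
open interval that contains both values and the values on `[a, b]` of some member `g`: leave `f₁`
for `g` close to `a`, and `g` for `f₂` close to `b`. -/
lemma exists_bridge (hG : G ⊆ ContFun) (hcomp : FamComplete G) (hconn : FamConnected G)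
    {f₁ f₂ g : ℝ → ℝ} (hf₁ : f₁ ∈ G) (hf₂ : f₂ ∈ G) (hg : g ∈ G) {a b m M : ℝ} (hab : a < b)
    (h₁ : f₁ a ∈ Ioo m M) (h₂ : f₂ b ∈ Ioo m M) (hgI : ∀ y ∈ Icc a b, g y ∈ Ioo m M) :
    ∃ k ∈ G, k a = f₁ a ∧ k b = f₂ b ∧ ∀ y ∈ Icc a b, k y ∈ Ioo m M := by
  obtain ⟨t, ⟨hat, htb⟩, ht⟩ : ∃ t ∈ Ioo a b, ∀ y ∈ Icc a t, f₁ y ∈ Ioo m M := by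
    have hev : ∀ᶠ y in 𝓝 a, f₁ y ∈ Ioo m M :=
      (hG hf₁ : Continuous f₁).continuousAt.eventually (isOpen_Ioo.mem_nhds h₁)
    obtain ⟨δ, hδ, h⟩ := Metric.eventually_nhds_iff.1 hev
    refine ⟨min (a + δ / 2) ((a + b) / 2), ⟨lt_min (by linarith) (by linarith),
      (min_le_right _ _).trans_lt (by linarith)⟩, fun y hy => h ?_⟩
    have := hy.2.trans (min_le_left _ _)
    rw [Real.dist_eq, abs_lt]
    constructor <;> linarith [hy.1]
  obtain ⟨s, ⟨hts, hsb⟩, hs⟩ : ∃ s ∈ Ioo t b, ∀ y ∈ Icc s b, f₂ y ∈ Ioo m M := by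
    have hev : ∀ᶠ y in 𝓝 b, f₂ y ∈ Ioo m M :=
      (hG hf₂ : Continuous f₂).continuousAt.eventually (isOpen_Ioo.mem_nhds h₂)
    obtain ⟨δ, hδ, h⟩ := Metric.eventually_nhds_iff.1 hev
    refine ⟨max (b - δ / 2) ((t + b) / 2), ⟨(lt_max_of_lt_right (by linarith)),
      max_lt (by linarith) (by linarith)⟩, fun y hy => h ?_⟩
    have := (le_max_left _ _).trans hy.1
    rw [Real.dist_eq, abs_lt]
    constructor <;> linarith [hy.2]
  obtain ⟨k₁, hk₁, hk₁a, hk₁t, hb₁⟩ := exists_mem_between hG hcomp hconn hf₁ hg hat.ne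
  obtain ⟨k₂, hk₂, hk₂s, hk₂b, hb₂⟩ := exists_mem_between hG hcomp hconn hg hf₂ hsb.ne
  have hr : glueAt s g k₂ ∈ G := glueAt_mem hG hcomp hg hk₂ hk₂s.symm
  have ht' : k₁ t = glueAt s g k₂ t := by rw [glueAt_left hts.le, hk₁t]
  refine ⟨glueAt t k₁ (glueAt s g k₂), glueAt_mem hG hcomp hk₁ hr ht', ?_, ?_, fun y hy => ?_⟩
  · rw [glueAt_left hat.le, hk₁a]
  · rw [glueAt_right ht' htb.le, glueAt_right hk₂s.symm hsb.le, hk₂b]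
  · have hgy := hgI y hy
    rcases le_total y t with h | h
    · rw [glueAt_left h]
      have hfy := ht y ⟨hy.1, h⟩
      exact ⟨(lt_min hfy.1 hgy.1).trans_le (hb₁ y).1, (hb₁ y).2.trans_lt (max_lt hfy.2 hgy.2)⟩
    · rw [glueAt_right ht' h]
      rcases le_total y s with h' | h'
      · rwa [glueAt_left h']
      · rw [glueAt_right hk₂s.symm h']
        have hfy := hs y ⟨h', hy.2⟩
        exact ⟨(lt_min hgy.1 hfy.1).trans_le (hb₂ y).1, (hb₂ y).2.trans_lt (max_lt hgy.2 hfy.2)⟩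

end Operations

/-! ### Extension from closed sets -/

section Extension

variable {G : Set (ℝ → ℝ)}

/-- Among the members of `G` through `(a, u)` and `(b, v)` there is one whose deviation from `u` on
`[a, b]` is smallest up to the error `b - a`. -/
lemma exists_optimal (hG : G ⊆ ContFun) (hconn : FamConnected G) {a b u v : ℝ} (hab : a < b)
    (hu : ∃ g ∈ G, g a = u) (hv : ∃ g ∈ G, g b = v) :
    ∃ h ∈ G, h a = u ∧ h b = v ∧ ∀ k ∈ G, k a = u → k b = v → ∀ r : ℝ,
      (∀ y ∈ Icc a b, |k y - u| ≤ r) → ∀ y ∈ Icc a b, |h y - u| ≤ r + (b - a) := by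
  set S : Set ℝ := {r | ∃ k ∈ G, k a = u ∧ k b = v ∧ ∀ y ∈ Icc a b, |k y - u| ≤ r} with hS
  have hSne : S.Nonempty := by
    obtain ⟨g₁, hg₁, rfl⟩ := hu
    obtain ⟨g₂, hg₂, rfl⟩ := hv
    obtain ⟨k, hk, hka, hkb⟩ := hconn g₁ hg₁ g₂ hg₂ a b hab.ne
    have hkc : Continuous k := hG hk
    obtain ⟨C, hC⟩ := (isCompact_Icc (a := a) (b := b)).exists_bound_of_continuousOn
      (f := fun y => k y - g₁ a) (by fun_prop)
    exact ⟨C, k, hk, hka, hkb, hC⟩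
  have hSbdd : BddBelow S := by
    refine ⟨0, ?_⟩
    rintro r ⟨k, -, -, -, hr⟩
    exact (abs_nonneg _).trans (hr a ⟨le_rfl, hab.le⟩)
  obtain ⟨r₀, ⟨h, hh, hha, hhb, hr₀⟩, hlt⟩ :=
    exists_lt_of_csInf_lt hSne (lt_add_of_pos_right (sInf S) (sub_pos.2 hab))
  refine ⟨h, hh, hha, hhb, fun k hk hka hkb r hr y hy => ?_⟩
  have : sInf S ≤ r := csInf_le hSbdd ⟨k, hk, hka, hkb, hr⟩
  linarith [hr₀ y hy]

/-- The bridges over all pairs of points of `E` can be chosen so that they converge to `f p`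
as their end points converge to `p`. -/
lemma exists_bridges (hG : G ⊆ ContFun) (hcomp : FamComplete G) (hconn : FamConnected G)
    {E : Set ℝ} {f : ℝ → ℝ} (hf : Continuous f) (hfE : ∀ x ∈ E, ∃ g ∈ G, g x = f x) :
    ∃ H : ℝ → ℝ → ℝ → ℝ,
      (∀ a ∈ E, ∀ b ∈ E, a < b → H a b ∈ G ∧ H a b a = f a ∧ H a b b = f b) ∧
      ∀ p ∈ E, ∀ ε > 0, ∃ δ > 0, ∀ a ∈ E, ∀ b ∈ E, a < b → |a - p| < δ → |b - p| < δ →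
        ∀ y ∈ Icc a b, |H a b y - f p| < ε := by
  have key : ∀ a b : ℝ, ∃ h : ℝ → ℝ, a ∈ E → b ∈ E → a < b →
      h ∈ G ∧ h a = f a ∧ h b = f b ∧ ∀ k ∈ G, k a = f a → k b = f b → ∀ r : ℝ,
      (∀ y ∈ Icc a b, |k y - f a| ≤ r) → ∀ y ∈ Icc a b, |h y - f a| ≤ r + (b - a) := by
    intro a b
    by_cases hc : a ∈ E ∧ b ∈ E ∧ a < b
    · obtain ⟨h, hh⟩ := exists_optimal hG hconn hc.2.2 (hfE a hc.1) (hfE b hc.2.1)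
      exact ⟨h, fun _ _ _ => hh⟩
    · exact ⟨f, fun h₁ h₂ h₃ => (hc ⟨h₁, h₂, h₃⟩).elim⟩
  choose H hH using key
  refine ⟨H, fun a ha b hb hab => ⟨(hH a b ha hb hab).1, (hH a b ha hb hab).2.1,
    (hH a b ha hb hab).2.2.1⟩, fun p hp ε hε => ?_⟩
  obtain ⟨g, hg, hgp⟩ := hfE p hp
  have hgc : Continuous g := hG hg
  obtain ⟨δ₁, hδ₁, h₁⟩ := Metric.continuousAt_iff.1 hgc.continuousAt (ε / 6) (by positivity)
  obtain ⟨δ₂, hδ₂, h₂⟩ :=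
    Metric.continuousAt_iff.1 (hf.continuousAt (x := p)) (ε / 6) (by positivity)
  refine ⟨min (min δ₁ δ₂) (ε / 6), by positivity, fun a ha b hb hab hap hbp y hy => ?_⟩
  simp only [lt_min_iff] at hap hbp
  have hfa := h₂ (x := a) hap.1.2
  have hfb := h₂ (x := b) hbp.1.2
  rw [Real.dist_eq] at hfa hfb
  have hgI : ∀ z ∈ Icc a b, g z ∈ Ioo (f p - ε / 6) (f p + ε / 6) := by
    intro z hz
    have hzp : dist z p < δ₁ := by
      have h₃ := abs_lt.1 hap.1.1
      have h₄ := abs_lt.1 hbp.1.1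
      rw [Real.dist_eq, abs_lt]
      constructor <;> linarith [hz.1, hz.2]
    have := h₁ hzp
    rw [Real.dist_eq, hgp, abs_lt] at this
    constructor <;> linarith
  obtain ⟨g₁, hg₁, hg₁a⟩ := hfE a ha
  obtain ⟨g₂, hg₂, hg₂b⟩ := hfE b hb
  rw [abs_lt] at hfa hfb
  obtain ⟨k, hk, hka, hkb, hkI⟩ := exists_bridge hG hcomp hconn hg₁ hg₂ hg hab
    (m := f p - ε / 6) (M := f p + ε / 6) (by rw [hg₁a]; constructor <;> linarith)
    (by rw [hg₂b]; constructor <;> linarith) hgI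
  have hopt := (hH a b ha hb hab).2.2.2 k hk (hka.trans hg₁a) (hkb.trans hg₂b) (ε / 3)
    (fun z hz => by
      have := hkI z hz
      rw [abs_le]
      constructor <;> linarith [this.1, this.2]) y hy
  have h₃ := abs_lt.1 hap.2
  have h₄ := abs_lt.1 hbp.2
  rw [abs_le] at hopt
  rw [abs_lt]
  constructor <;> linarith

/-- The extension property for closed sets unbounded in both directions, where every gap is
a bounded interval. -/
lemma exists_eqOn_of_unbounded (hG : G ⊆ ContFun) (hcomp : FamComplete G) (hconn : FamConnected G)
    {E : Set ℝ} (hE : IsClosed E) (hup : ∀ x, ∃ e ∈ E, x ≤ e) (hlo : ∀ x, ∃ e ∈ E, e ≤ x)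
    {f : ℝ → ℝ} (hf : Continuous f) (hfE : ∀ x ∈ E, ∃ g ∈ G, g x = f x) :
    RG G f E := by
  obtain ⟨H, hH, hHlim⟩ := exists_bridges hG hcomp hconn hf hfE
  -- `A x` and `B x` are the points of `E` nearest to `x` on either side.
  set A : ℝ → ℝ := fun x => sSup (E ∩ Iic x) with hA
  set B : ℝ → ℝ := fun x => sInf (E ∩ Ici x) with hB
  have hAmem : ∀ x, A x ∈ E ∩ Iic x := fun x =>
    (hE.inter isClosed_Iic).csSup_mem (hlo x) ⟨x, fun _ h => h.2⟩
  have hBmem : ∀ x, B x ∈ E ∩ Ici x := fun x =>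
    (hE.inter isClosed_Ici).csInf_mem (hup x) ⟨x, fun _ h => h.2⟩
  have hAge : ∀ x, ∀ e ∈ E, e ≤ x → e ≤ A x := fun x e he hex =>
    le_csSup ⟨x, fun _ h => h.2⟩ ⟨he, hex⟩
  have hBle : ∀ x, ∀ e ∈ E, x ≤ e → B x ≤ e := fun x e he hex =>
    csInf_le ⟨x, fun _ h => h.2⟩ ⟨he, hex⟩
  have hlt : ∀ x, x ∉ E → A x < x ∧ x < B x := fun x hx =>
    ⟨lt_of_le_of_ne (hAmem x).2 fun h => hx (h ▸ (hAmem x).1),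
      lt_of_le_of_ne (hBmem x).2 fun h => hx (h ▸ (hBmem x).1)⟩
  classical
  set g : ℝ → ℝ := fun x => if x ∈ E then f x else H (A x) (B x) x with hg
  have hgE : ∀ x ∈ E, g x = f x := fun x hx => if_pos hx
  have hgN : ∀ x, x ∉ E → g x = H (A x) (B x) x := fun x hx => if_neg hx
  have hgap : ∀ a ∈ E, ∀ b ∈ E, a < b → (∀ e ∈ E, e ≤ a ∨ b ≤ e) →
      ∀ y ∈ Icc a b, g y = H a b y := by
    intro a ha b hb hab hgp y hy
    by_cases hyE : y ∈ E
    · rw [hgE y hyE]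
      rcases hgp y hyE with h | h
      · rw [le_antisymm h hy.1, (hH a ha b hb hab).2.1]
      · rw [le_antisymm hy.2 h, (hH a ha b hb hab).2.2]
    · have h₁ : A y = a := by
        refine le_antisymm ?_ (hAge y a ha hy.1)
        rcases hgp _ (hAmem y).1 with h | h
        · exact h
        · exact absurd (h.trans_lt (hlt y hyE).1) (not_lt.2 hy.2)
      have h₂ : B y = b := by
        refine le_antisymm (hBle y b hb hy.2) ?_
        rcases hgp _ (hBmem y).1 with h | h
        · exact absurd ((hlt y hyE).2.trans_le h) (not_lt.2 hy.1)
        · exact h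
      rw [hgN y hyE, h₁, h₂]
  have hgapN : ∀ x, x ∉ E → ∀ e ∈ E, e ≤ A x ∨ B x ≤ e := fun x _ e he =>
    (le_total e x).imp (hAge x e he) (hBle x e he)
  have hgc : Continuous g := by
    rw [continuous_iff_continuousAt]
    intro p
    by_cases hp : p ∈ E
    swap
    · have hpl := hlt p hp
      have hHc : Continuous (H (A p) (B p)) :=
        hG (hH _ (hAmem p).1 _ (hBmem p).1 (hpl.1.trans hpl.2)).1
      refine hHc.continuousAt.congr ?_
      filter_upwards [Icc_mem_nhds hpl.1 hpl.2] with y hy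
      exact (hgap _ (hAmem p).1 _ (hBmem p).1 (hpl.1.trans hpl.2) (hgapN p hp) y hy).symm
    -- At `p ∈ E`, each side is either a gap or accumulated by points of `E`; in the latter
    -- case all gaps meeting a small one-sided neighbourhood have both end points close to `p`.
    have hnear : ∀ ε > 0, ∃ δ > 0, ∀ c ∈ E, ∀ d ∈ E, |c - p| < δ → |d - p| < δ →
        ∀ y ∈ Icc c d, |g y - g p| < ε := by
      intro ε hε
      obtain ⟨δ₁, hδ₁, h₁⟩ := hHlim p hp ε hε
      obtain ⟨δ₂, hδ₂, h₂⟩ := Metric.continuousAt_iff.1 (hf.continuousAt (x := p)) ε hε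
      refine ⟨min δ₁ δ₂, lt_min hδ₁ hδ₂, fun c hc d hd hcp hdp y hy => ?_⟩
      rw [lt_min_iff, abs_lt, abs_lt] at hcp hdp
      rw [hgE p hp]
      by_cases hyE : y ∈ E
      · rw [hgE y hyE, ← Real.dist_eq]
        apply h₂
        rw [Real.dist_eq, abs_lt]
        constructor <;> linarith [hy.1, hy.2]
      · rw [hgN y hyE]
        have hyl := hlt y hyE
        have hca := hAge y c hc hy.1
        have hbd := hBle y d hd hy.2
        refine h₁ _ (hAmem y).1 _ (hBmem y).1 (hyl.1.trans hyl.2) ?_ ?_ y ⟨hyl.1.le, hyl.2.le⟩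
        · rw [abs_lt]; constructor <;> linarith
        · rw [abs_lt]; constructor <;> linarith
    rw [continuousAt_iff_continuous_left'_right']
    constructor
    · by_cases hgl : ∃ a ∈ E, a < p ∧ ∀ e ∈ E, e ≤ a ∨ p ≤ e
      · obtain ⟨a, ha, hap, hgl⟩ := hgl
        have hHc : Continuous (H a p) := hG (hH a ha p hp hap).1
        refine hHc.continuousAt.continuousWithinAt.congr_of_eventuallyEq ?_
          (hgap a ha p hp hap hgl p ⟨hap.le, le_rfl⟩)
        filter_upwards [Ioo_mem_nhdsLT hap] with y hy
        exact hgap a ha p hp hap hgl y ⟨hy.1.le, hy.2.le⟩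
      · push Not at hgl
        rw [ContinuousWithinAt, Metric.tendsto_nhds]
        intro ε hε
        obtain ⟨δ, hδ, h⟩ := hnear ε hε
        obtain ⟨e, he, hep, heδ⟩ : ∃ e ∈ E, e < p ∧ p - δ < e := by
          by_cases hAp : p - δ < A (p - δ / 2)
          · exact ⟨_, (hAmem _).1, by linarith [(hAmem (p - δ / 2)).2.out], hAp⟩
          · obtain ⟨e, he, h₁, h₂⟩ := hgl _ (hAmem (p - δ / 2)).1
              (by linarith [(hAmem (p - δ / 2)).2.out])
            refine ⟨e, he, h₂, ?_⟩
            by_contra hcon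
            exact absurd (hAge (p - δ / 2) e he (by linarith)) (not_le.2 h₁)
        filter_upwards [Ioo_mem_nhdsLT hep] with y hy
        rw [Real.dist_eq]
        exact h e he p hp (by rw [abs_lt]; constructor <;> linarith) (by simpa using hδ) y
          ⟨hy.1.le, hy.2.le⟩
    · by_cases hgr : ∃ b ∈ E, p < b ∧ ∀ e ∈ E, e ≤ p ∨ b ≤ e
      · obtain ⟨b, hb, hpb, hgr⟩ := hgr
        have hHc : Continuous (H p b) := hG (hH p hp b hb hpb).1
        refine hHc.continuousAt.continuousWithinAt.congr_of_eventuallyEq ?_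
          (hgap p hp b hb hpb hgr p ⟨le_rfl, hpb.le⟩)
        filter_upwards [Ioo_mem_nhdsGT hpb] with y hy
        exact hgap p hp b hb hpb hgr y ⟨hy.1.le, hy.2.le⟩
      · push Not at hgr
        rw [ContinuousWithinAt, Metric.tendsto_nhds]
        intro ε hε
        obtain ⟨δ, hδ, h⟩ := hnear ε hε
        obtain ⟨e, he, hep, heδ⟩ : ∃ e ∈ E, p < e ∧ e < p + δ := by
          by_cases hBp : B (p + δ / 2) < p + δ
          · exact ⟨_, (hBmem _).1, by linarith [(hBmem (p + δ / 2)).2.out], hBp⟩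
          · obtain ⟨e, he, h₁, h₂⟩ := hgr _ (hBmem (p + δ / 2)).1
              (by linarith [(hBmem (p + δ / 2)).2.out])
            refine ⟨e, he, h₁, ?_⟩
            by_contra hcon
            exact absurd (hBle (p + δ / 2) e he (by linarith)) (not_le.2 h₂)
        filter_upwards [Ioo_mem_nhdsGT hep] with y hy
        rw [Real.dist_eq]
        exact h p hp e he (by simpa using hδ) (by rw [abs_lt]; constructor <;> linarith) y
          ⟨hy.1.le, hy.2.le⟩
  refine ⟨g, hcomp g hgc fun x => ?_, fun x hx => (hgE x hx).symm⟩
  by_cases hx : x ∈ E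
  · rw [hgE x hx]
    exact hfE x hx
  · have hxl := hlt x hx
    exact ⟨_, (hH _ (hAmem x).1 _ (hBmem x).1 (hxl.1.trans hxl.2)).1, (hgN x hx).symm⟩

/-- The extension property. A half-line beyond an extreme point of `E` is first added to `E`, with
`f` continued on it by a member of `G`. -/
lemma exists_eqOn (hG : G ⊆ ContFun) (hne : G.Nonempty) (hcomp : FamComplete G)
    (hconn : FamConnected G) {E : Set ℝ} (hE : IsClosed E) {f : ℝ → ℝ} (hf : Continuous f)
    (hfE : ∀ x ∈ E, ∃ g ∈ G, g x = f x) : RG G f E := by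
  rcases E.eq_empty_or_nonempty with rfl | hEne
  · obtain ⟨g, hg⟩ := hne
    exact ⟨g, hg, fun x hx => hx.elim⟩
  obtain ⟨E₁, f₁, hE₁, hEE₁, hf₁, hff₁, hfE₁, hup⟩ : ∃ (E₁ : Set ℝ) (f₁ : ℝ → ℝ), IsClosed E₁ ∧
      E ⊆ E₁ ∧ Continuous f₁ ∧ EqOn f f₁ E ∧ (∀ x ∈ E₁, ∃ g ∈ G, g x = f₁ x) ∧
      ∀ x, ∃ e ∈ E₁, x ≤ e := by
    by_cases hb : BddAbove E
    · have hM := hE.csSup_mem hEne hb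
      have hle : ∀ x ∈ E, x ≤ sSup E := fun x hx => le_csSup hb hx
      obtain ⟨h, hh, hhM⟩ := hfE _ hM
      refine ⟨E ∪ Ici (sSup E), glueAt (sSup E) f h, hE.union isClosed_Ici, subset_union_left,
        continuous_glueAt hf (hG hh) hhM.symm, fun x hx => (glueAt_left (hle x hx)).symm, ?_,
        fun x => ⟨max x (sSup E), Or.inr (mem_Ici.2 (le_max_right _ _)), le_max_left _ _⟩⟩
      rintro x (hx | hx)
      · rw [glueAt_left (hle x hx)]
        exact hfE x hx
      · exact ⟨h, hh, (glueAt_right hhM.symm hx).symm⟩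
    · refine ⟨E, f, hE, Subset.rfl, hf, fun _ _ => rfl, hfE, fun x => ?_⟩
      obtain ⟨e, he, hxe⟩ := not_bddAbove_iff.1 hb x
      exact ⟨e, he, hxe.le⟩
  have hE₁ne : E₁.Nonempty := hEne.mono hEE₁
  obtain ⟨E₂, f₂, hE₂, hEE₂, hf₂, hff₂, hfE₂, hlo⟩ : ∃ (E₂ : Set ℝ) (f₂ : ℝ → ℝ), IsClosed E₂ ∧
      E₁ ⊆ E₂ ∧ Continuous f₂ ∧ EqOn f₁ f₂ E₁ ∧ (∀ x ∈ E₂, ∃ g ∈ G, g x = f₂ x) ∧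
      ∀ x, ∃ e ∈ E₂, e ≤ x := by
    by_cases hb : BddBelow E₁
    · have hM := hE₁.csInf_mem hE₁ne hb
      have hle : ∀ x ∈ E₁, sInf E₁ ≤ x := fun x hx => csInf_le hb hx
      obtain ⟨h, hh, hhM⟩ := hfE₁ _ hM
      refine ⟨E₁ ∪ Iic (sInf E₁), glueAt (sInf E₁) h f₁, hE₁.union isClosed_Iic, subset_union_left,
        continuous_glueAt (hG hh) hf₁ hhM, fun x hx => (glueAt_right hhM (hle x hx)).symm, ?_,
        fun x => ⟨min x (sInf E₁), Or.inr (mem_Iic.2 (min_le_right _ _)), min_le_left _ _⟩⟩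
      rintro x (hx | hx)
      · rw [glueAt_right hhM (hle x hx)]
        exact hfE₁ x hx
      · exact ⟨h, hh, (glueAt_left hx).symm⟩
    · refine ⟨E₁, f₁, hE₁, Subset.rfl, hf₁, fun _ _ => rfl, hfE₁, fun x => ?_⟩
      obtain ⟨e, he, hxe⟩ := not_bddBelow_iff.1 hb x
      exact ⟨e, he, hxe.le⟩
  obtain ⟨g, hg, hgf⟩ := exists_eqOn_of_unbounded hG hcomp hconn hE₂
    (fun x => (hup x).imp fun e he => ⟨hEE₂ he.1, he.2⟩) hlo hf₂ hfE₂
  exact ⟨g, hg, fun x hx => (hff₁ hx).trans ((hff₂ (hEE₁ hx)).trans (hgf (hEE₂ (hEE₁ hx))))⟩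

end Extension

/-! ### The equivalence -/

section Galois

variable {G : Set (ℝ → ℝ)}

lemma EG_mem_KG {F : Set (ℝ → ℝ)} (hF : F ⊆ ContFun) : EG G F ∈ KG G := by
  refine Subset.antisymm (fun E hE => ⟨hE.1, fun f hf => ?_⟩) fun E hE => ⟨hE.1, fun f hf => ?_⟩
  · exact hE.2 f ⟨hF hf, fun E' hE' => hE'.2 f hf⟩
  · exact hf.2 E hE

/-- If all members of `K_G` are of the form `CL(ℝ) ∩ P(X)`, then a continuous function with
`f x ∈ G[x]` on a closed set `E` agrees on `E` with a member of `G`. -/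
lemma RG_of_KG (hK : KG G = {𝒜 | ∃ X : Set ℝ, 𝒜 = {E | IsClosed E ∧ E ⊆ X}})
    {f : ℝ → ℝ} (hf : Continuous f) {E : Set ℝ} (hE : IsClosed E)
    (hfE : ∀ x ∈ E, ∃ g ∈ G, g x = f x) : RG G f E := by
  have hmem : EG G {f} ∈ KG G := EG_mem_KG (singleton_subset_iff.2 hf)
  rw [hK] at hmem
  obtain ⟨X, hX⟩ := hmem
  have hEX : E ⊆ X := by
    intro x hx
    have hxm : ({x} : Set ℝ) ∈ EG G {f} := by
      refine ⟨isClosed_singleton, ?_⟩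
      rintro _ rfl
      obtain ⟨g, hg, hgx⟩ := hfE x hx
      exact ⟨g, hg, by rintro _ rfl; exact hgx.symm⟩
    rw [hX] at hxm
    exact hxm.2 rfl
  have hEm : E ∈ EG G {f} := by
    rw [hX]
    exact ⟨hE, hEX⟩
  exact hEm.2 f rfl

end Galois

theorem stmt_16 (G : Set (ℝ → ℝ)) (hG : G ⊆ ContFun) (hne : G.Nonempty) :
    (KG G = {𝒜 | ∃ X : Set ℝ, 𝒜 = {E | IsClosed E ∧ E ⊆ X}}) ↔
    (FamComplete G ∧ FamConnected G ∧
      ∀ x : ℝ, ∃ f : ℝ → ℝ, Continuous f ∧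
        (∀ y : ℝ, y ≠ x → ∃ g ∈ G, g y = f y) ∧ ¬∃ g ∈ G, g x = f x) := by
  constructor
  · intro hK
    refine ⟨fun f hf hfx => ?_, fun f hf g hg x y hxy => ?_, fun x => ?_⟩
    · obtain ⟨g, hg, hfg⟩ := RG_of_KG hK hf isClosed_univ fun x _ => hfx x
      rwa [show f = g from funext fun x => hfg (mem_univ x)]
    · -- The affine function through `(x, f x)` and `(y, g y)`.
      set k : ℝ → ℝ := fun t => f x + (t - x) / (y - x) * (g y - f x) with hk
      have hkx : k x = f x := by simp [hk]
      have hky : k y = g y := by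
        have : y - x ≠ 0 := sub_ne_zero.2 hxy.symm
        simp [hk, div_self this]
      have hkc : Continuous k := by fun_prop
      obtain ⟨h, hh, hkh⟩ := RG_of_KG hK hkc (E := {x, y}) (toFinite _).isClosed (by
        rintro z (rfl | rfl)
        · exact ⟨f, hf, hkx.symm⟩
        · exact ⟨g, hg, hky.symm⟩)
      exact ⟨h, hh, (hkh (by simp)).symm.trans hkx, (hkh (by simp)).symm.trans hky⟩
    · have hmem : {E : Set ℝ | IsClosed E ∧ E ⊆ {x}ᶜ} ∈ KG G := by
        rw [hK]
        exact ⟨_, rfl⟩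
      have hnot : ({x} : Set ℝ) ∉ EG G (FG G {E : Set ℝ | IsClosed E ∧ E ⊆ {x}ᶜ}) := by
        rw [show EG G (FG G _) = _ from hmem]
        exact fun h => h.2 rfl rfl
      have hex : ∃ f ∈ FG G {E : Set ℝ | IsClosed E ∧ E ⊆ {x}ᶜ}, ¬RG G f {x} := by
        by_contra! hcon
        exact hnot ⟨isClosed_singleton, hcon⟩
      obtain ⟨f, hf, hfx⟩ := hex
      refine ⟨f, hf.1, fun y hy => ?_, ?_⟩
      · obtain ⟨g, hg, hfg⟩ := hf.2 {y} ⟨isClosed_singleton, by simpa using hy.symm⟩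
        exact ⟨g, hg, (hfg rfl).symm⟩
      · rintro ⟨g, hg, hgx⟩
        exact hfx ⟨g, hg, by rintro _ rfl; exact hgx.symm⟩
  · rintro ⟨hcomp, hconn, hsep⟩
    ext ℰ
    constructor
    · intro hℰ
      have hℰ' : EG G (FG G ℰ) = ℰ := hℰ
      refine ⟨⋃₀ ℰ, Subset.antisymm (fun E hE => ⟨?_, subset_sUnion_of_mem hE⟩) ?_⟩
      · rw [← hℰ'] at hE
        exact hE.1
      · rintro E ⟨hE, hEX⟩
        rw [← hℰ']
        refine ⟨hE, fun f hf => exists_eqOn hG hne hcomp hconn hE hf.1 fun x hx => ?_⟩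
        obtain ⟨E', hE', hxE'⟩ := hEX hx
        obtain ⟨g, hg, hfg⟩ := hf.2 E' hE'
        exact ⟨g, hg, (hfg hxE').symm⟩
    · rintro ⟨X, rfl⟩
      refine Subset.antisymm (fun E hE => ⟨hE.1, fun x hx => ?_⟩)
        fun E hE => ⟨hE.1, fun f hf => hf.2 E hE⟩
      by_contra hxX
      obtain ⟨f, hf, hfy, hfx⟩ := hsep x
      obtain ⟨g, hg, hfg⟩ := hE.2 f ⟨hf, fun E' hE' => exists_eqOn hG hne hcomp hconn hE'.1 hf
        fun y hy => hfy y (by rintro rfl; exact hxX (hE'.2 hy))⟩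
      exact hfx ⟨g, hg, (hfg hx).symm⟩
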